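/- (Wiener's lemma on the circle) Let μ be a finite complex Borel measure on the circle T = R/Z. Then μ({0}) = lim_{N→∞} (1/(2N+1)) Σ_{n=-N}^{N} μ̂(n), where μ̂(n) = ∫_T e^{-2πint} dμ(t). -/

import Mathlib

open MeasureTheory Filter Topology

/-- Integral of a complex-valued function against a finite complex measure. -/
noncomputable def cInt {α : Type*} [MeasurableSpace α]
    (μ : MeasureTheory.ComplexMeasure α) (f : α → ℂ) : ℂ :=
  ((∫ x, f x ∂μ.re.toJordanDecomposition.posPart)
      - ∫ x, f x ∂μ.re.toJordanDecomposition.negPart)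
    + Complex.I * ((∫ x, f x ∂μ.im.toJordanDecomposition.posPart)
      - ∫ x, f x ∂μ.im.toJordanDecomposition.negPart)

/-- The Fourier–Stieltjes coefficients of a finite complex measure on the circle `ℝ/ℤ`:
`μ̂(n) = ∫_𝕋 e^{-2πint} dμ(t)`. -/
noncomputable def fourierCoeff' (μ : MeasureTheory.ComplexMeasure UnitAddCircle)
    (n : ℤ) : ℂ :=
  cInt μ (fun t => fourier (-n) t)

/-- The normalized Dirichlet kernel `(2N + 1)⁻¹ ∑_{|n| ≤ N} e^{-2πint}` on `ℝ/ℤ`. -/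
noncomputable def normalizedDirichletKernel (N : ℕ) (t : UnitAddCircle) : ℂ :=
  (2 * (N : ℂ) + 1)⁻¹ * ∑ n ∈ Finset.Icc (-(N : ℤ)) (N : ℤ), fourier (-n) t

lemma norm_two_mul_natCast_add_one (N : ℕ) : ‖2 * (N : ℂ) + 1‖ = 2 * N + 1 := by
  exact_mod_cast Complex.norm_natCast (2 * N + 1)

lemma continuous_normalizedDirichletKernel (N : ℕ) :
    Continuous (normalizedDirichletKernel N) := by
  unfold normalizedDirichletKernel
  fun_prop

lemma norm_fourier_apply {T : ℝ} (n : ℤ) (t : AddCircle T) : ‖fourier n t‖ = 1 :=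
  Circle.norm_coe _

lemma norm_normalizedDirichletKernel_le_one (N : ℕ) (t : UnitAddCircle) :
    ‖normalizedDirichletKernel N t‖ ≤ 1 := by
  have h : ‖∑ n ∈ Finset.Icc (-(N : ℤ)) (N : ℤ), fourier (-n) t‖ ≤ 2 * N + 1 := by
    refine (norm_sum_le _ _).trans ?_
    simp only [norm_fourier_apply, Finset.sum_const, Int.card_Icc, nsmul_eq_mul, mul_one]
    rw [show ((N : ℤ) + 1 - -(N : ℤ)).toNat = 2 * N + 1 by lia]
    push_cast
    rfl
  rw [normalizedDirichletKernel, norm_mul, norm_inv, norm_two_mul_natCast_add_one,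
    inv_mul_le_iff₀ (by positivity), mul_one]
  exact h

lemma normalizedDirichletKernel_zero (N : ℕ) : normalizedDirichletKernel N 0 = 1 := by
  have h : (2 * (N : ℂ) + 1) ≠ 0 := by
    rw [← norm_ne_zero_iff, norm_two_mul_natCast_add_one]
    positivity
  simp only [normalizedDirichletKernel, fourier_eval_zero, Finset.sum_const, Int.card_Icc,
    nsmul_eq_mul, mul_one]
  rw [show ((N : ℤ) + 1 - -(N : ℤ)).toNat = 2 * N + 1 by lia]
  push_cast
  exact inv_mul_cancel₀ h

lemma one_sub_fourier_mul_sum_Icc {T : ℝ} (N : ℕ) (t : AddCircle T) :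
    (1 - fourier (-1) t) * ∑ n ∈ Finset.Icc (-(N : ℤ)) (N : ℤ), fourier (-n) t =
      fourier (N : ℤ) t - fourier (-((N : ℤ) + 1)) t := by
  induction N with
  | zero => simp
  | succ N ih =>
    rw [Nat.cast_succ, Finset.sum_Icc_succ_eq_add_endpoints, mul_add, ih, neg_neg,
      sub_mul, one_mul, mul_add, ← fourier_add, ← fourier_add]
    rw [show -1 + -((N : ℤ) + 1) = -((N : ℤ) + 1 + 1) by ring,
      show -1 + ((N : ℤ) + 1) = N by ring]
    ring

lemma fourier_ne_one_of_ne_zero {t : UnitAddCircle} (ht : t ≠ 0) : fourier (-1) t ≠ 1 := by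
  intro h
  rw [fourier_apply, neg_one_zsmul] at h
  have hcircle : AddCircle.toCircle (-t) = AddCircle.toCircle (0 : UnitAddCircle) := by
    rw [AddCircle.toCircle_zero]
    exact Circle.ext h
  exact ht (neg_eq_zero.mp (AddCircle.injective_toCircle one_ne_zero hcircle))

lemma tendsto_normalizedDirichletKernel_of_ne_zero {t : UnitAddCircle} (ht : t ≠ 0) :
    Tendsto (fun N => normalizedDirichletKernel N t) atTop (𝓝 0) := by
  have hz : 1 - fourier (-1) t ≠ 0 := sub_ne_zero.mpr (fourier_ne_one_of_ne_zero ht).symm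
  have hlim : Tendsto (fun N : ℕ => (2 * (N : ℝ) + 1)⁻¹ * (2 / ‖1 - fourier (-1) t‖))
      atTop (𝓝 0) := by
    rw [← zero_mul (2 / ‖1 - fourier (-1) t‖)]
    exact (tendsto_inv_atTop_zero.comp (tendsto_atTop_add_const_right _ _
      (tendsto_natCast_atTop_atTop.const_mul_atTop two_pos))).mul_const _
  refine squeeze_zero_norm (fun N => ?_) hlim
  rw [normalizedDirichletKernel, norm_mul, norm_inv, norm_two_mul_natCast_add_one]
  gcongr
  rw [le_div_iff₀' (norm_pos_iff.mpr hz), ← norm_mul, one_sub_fourier_mul_sum_Icc]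
  refine (norm_sub_le _ _).trans ?_
  rw [norm_fourier_apply, norm_fourier_apply]
  norm_num

lemma tendsto_integral_normalizedDirichletKernel (ν : Measure UnitAddCircle)
    [IsFiniteMeasure ν] :
    Tendsto (fun N => ∫ t, normalizedDirichletKernel N t ∂ν) atTop (𝓝 (ν.real {0} : ℂ)) := by
  have h : ∫ t, ({0} : Set UnitAddCircle).indicator (fun _ => (1 : ℂ)) t ∂ν = ν.real {0} := by
    rw [integral_indicator_const _ (measurableSet_singleton 0)]
    simp
  rw [← h]
  refine tendsto_integral_of_dominated_convergence (fun _ => 1)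
    (fun N => (continuous_normalizedDirichletKernel N).aestronglyMeasurable)
    (integrable_const 1)
    (fun N => ae_of_all _ (norm_normalizedDirichletKernel_le_one N)) (ae_of_all _ fun t => ?_)
  by_cases ht : t = 0
  · simp [ht, normalizedDirichletKernel_zero]
  · simpa [ht] using tendsto_normalizedDirichletKernel_of_ne_zero ht

lemma integral_normalizedDirichletKernel (ν : Measure UnitAddCircle) [IsFiniteMeasure ν]
    (N : ℕ) :
    ∫ t, normalizedDirichletKernel N t ∂ν =
      (2 * (N : ℂ) + 1)⁻¹ *
        ∑ n ∈ Finset.Icc (-(N : ℤ)) (N : ℤ), ∫ t, fourier (-n) t ∂ν := by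
  simp only [normalizedDirichletKernel]
  rw [integral_const_mul, integral_finsetSum]
  intro n _
  exact .of_bound (by fun_prop) 1 (ae_of_all _ fun t => (norm_fourier_apply _ t).le)

lemma inv_mul_sum_fourierStieltjesCoeff_eq_cInt (μ : ComplexMeasure UnitAddCircle) (N : ℕ) :
    (2 * (N : ℂ) + 1)⁻¹ * ∑ n ∈ Finset.Icc (-(N : ℤ)) (N : ℤ), fourierCoeff' μ n =
      cInt μ (normalizedDirichletKernel N) := by
  simp only [fourierCoeff', cInt, integral_normalizedDirichletKernel, Finset.sum_add_distrib,
    Finset.sum_sub_distrib, ← Finset.mul_sum]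
  ring

lemma complexMeasure_apply_eq_jordanDecomposition {α : Type*} [MeasurableSpace α]
    (μ : ComplexMeasure α) {s : Set α} (hs : MeasurableSet s) :
    μ s = ((μ.re.toJordanDecomposition.posPart.real s : ℂ)
        - μ.re.toJordanDecomposition.negPart.real s)
      + Complex.I * ((μ.im.toJordanDecomposition.posPart.real s : ℂ)
        - μ.im.toJordanDecomposition.negPart.real s) := by
  have hre := μ.re.apply_eq_posPart_real_sub_negPart_real hs
  have him := μ.im.apply_eq_posPart_real_sub_negPart_real hs
  rw [← Complex.ofReal_sub, ← Complex.ofReal_sub, ← hre, ← him, mul_comm]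
  exact (Complex.re_add_im (μ s)).symm

/-- **Wiener's lemma on the circle.** For a finite complex Borel measure `μ` on `𝕋 = ℝ/ℤ`,
`μ({0}) = lim_{N→∞} (1/(2N+1)) ∑_{n=-N}^{N} μ̂(n)`. -/
theorem wiener_lemma_circle (μ : MeasureTheory.ComplexMeasure UnitAddCircle) :
    Tendsto (fun N : ℕ =>
        ((2 * (N : ℂ) + 1))⁻¹ * ∑ n ∈ Finset.Icc (-(N : ℤ)) (N : ℤ), fourierCoeff' μ n)
      atTop (𝓝 (μ {(0 : UnitAddCircle)})) := by
  simp only [inv_mul_sum_fourierStieltjesCoeff_eq_cInt]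
  rw [complexMeasure_apply_eq_jordanDecomposition μ (measurableSet_singleton 0)]
  exact ((tendsto_integral_normalizedDirichletKernel _).sub
    (tendsto_integral_normalizedDirichletKernel _)).add
    (((tendsto_integral_normalizedDirichletKernel _).sub
      (tendsto_integral_normalizedDirichletKernel _)).const_mul _)
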